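/- For all integers n ≥ 0 and k ≥ 1, 𝔠^{(k)}_{2n} = (-4)^n (n!)^2 ∫_{[0,1]^k} binom(p/2, n) · binom(-p/2, n) dx₁⋯dx_k, where p = x₁x₂⋯x_k is the product of the coordinates and binom(z,n) = z(z-1)⋯(z-n+1)/n! is the generalized binomial coefficient; the integral is over the unit cube [0,1]^k with Lebesgue measure. -/

import Mathlib

/-- Stirling numbers of the first kind with level 2. -/
def T2 : ℕ → ℕ → ℕ
  | 0, 0 => 1
  | 0, _ + 1 => 0
  | _ + 1, 0 => 0
  | n + 1, m + 1 => T2 n m + n ^ 2 * T2 n (m + 1)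

/-- Poly-Cauchy numbers with level 2: `polyCauchy2 k n = 𝔠^{(k)}_{2n}`. -/
def polyCauchy2 (k : ℤ) (n : ℕ) : ℚ :=
  ∑ m ∈ Finset.range (n + 1), (-4 : ℚ) ^ (n - m) * (T2 n m : ℚ) / (2 * (m : ℚ) + 1) ^ k

/-- Generalized binomial coefficient `binom(z, n) = z(z-1)⋯(z-n+1)/n!`. -/
noncomputable def genBinom (z : ℝ) (n : ℕ) : ℝ :=
  (∏ i ∈ Finset.range n, (z - (i : ℝ))) / (Nat.factorial n : ℝ)

/-!
Since `(z - i) * (-z - i) = i ^ 2 - z ^ 2`, the integrand times `(-4) ^ n * (n !) ^ 2` is the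
polynomial `∏ i < n, (p ^ 2 - 4 * i ^ 2)` in the product `p` of the coordinates. The coefficient of
`p ^ (2 * m)` is the level-2 Stirling number `T2 n m` times `(-4) ^ (n - m)`, and integrating
`p ^ (2 * m)` over the unit cube produces the denominator `(2 * m + 1) ^ k`.
-/

open Finset MeasureTheory
open scoped Nat

theorem T2_succ_zero (n : ℕ) : T2 (n + 1) 0 = 0 := by
  rw [T2]

theorem T2_succ_succ (n m : ℕ) :
    T2 (n + 1) (m + 1) = T2 n m + n ^ 2 * T2 n (m + 1) := by
  rw [T2]

theorem T2_eq_zero_of_lt {n m : ℕ} (h : n < m) : T2 n m = 0 := by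
  induction n generalizing m with
  | zero =>
    obtain ⟨m, rfl⟩ := Nat.exists_eq_succ_of_ne_zero h.ne'
    rw [T2]
  | succ n ih =>
    obtain ⟨m, rfl⟩ := Nat.exists_eq_succ_of_ne_zero (Nat.ne_zero_of_lt h)
    rw [T2_succ_succ, ih (by lia), ih (by lia), mul_zero, add_zero]

theorem sq_mul_T2_zero (n : ℕ) : n ^ 2 * T2 n 0 = 0 := by
  cases n with
  | zero => simp
  | succ n => rw [T2_succ_zero, mul_zero]

section GeneratingFunction

variable {R : Type*} [CommSemiring R]

theorem sum_antidiagonal_sq_mul_T2_succ (n : ℕ) (y c : R) :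
    ∑ ij ∈ antidiagonal n, (n ^ 2 * T2 n (ij.1 + 1) : ℕ) * y ^ (ij.1 + 1) * c ^ ij.2 =
      c * n ^ 2 * ∑ ij ∈ antidiagonal n, T2 n ij.1 * y ^ ij.1 * c ^ ij.2 := by
  -- The boundary terms vanish, so the shift in the exponent of `y` can be moved to that of `c`.
  let term (ij : ℕ × ℕ) : R := (n ^ 2 * T2 n ij.1 : ℕ) * y ^ ij.1 * c ^ ij.2
  calc ∑ ij ∈ antidiagonal n, term (ij.1 + 1, ij.2)
    _ = ∑ ij ∈ antidiagonal (n + 1), term ij := by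
      rw [Nat.sum_antidiagonal_succ]
      simp only [term, sq_mul_T2_zero, Nat.cast_zero, zero_mul, zero_add]
    _ = ∑ ij ∈ antidiagonal n, term (ij.1, ij.2 + 1) := by
      rw [Nat.sum_antidiagonal_succ']
      simp only [term, T2_eq_zero_of_lt n.lt_succ_self, mul_zero, Nat.cast_zero, zero_mul,
        zero_add]
    _ = c * n ^ 2 * ∑ ij ∈ antidiagonal n, T2 n ij.1 * y ^ ij.1 * c ^ ij.2 := by
      rw [mul_sum]
      refine sum_congr rfl fun ij _ => ?_
      simp only [term]
      push_cast
      ring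

theorem sum_antidiagonal_T2_mul_pow (n : ℕ) (y c : R) :
    ∑ ij ∈ antidiagonal n, T2 n ij.1 * y ^ ij.1 * c ^ ij.2 =
      ∏ i ∈ range n, (y + c * i ^ 2) := by
  induction n with
  | zero => simp [T2]
  | succ n ih =>
    calc ∑ ij ∈ antidiagonal (n + 1), T2 (n + 1) ij.1 * y ^ ij.1 * c ^ ij.2
      _ = ∑ ij ∈ antidiagonal n, T2 (n + 1) (ij.1 + 1) * y ^ (ij.1 + 1) * c ^ ij.2 := by
        rw [Nat.sum_antidiagonal_succ]
        simp only [T2_succ_zero, Nat.cast_zero, zero_mul, zero_add]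
      _ = y * ∑ ij ∈ antidiagonal n, T2 n ij.1 * y ^ ij.1 * c ^ ij.2 +
          ∑ ij ∈ antidiagonal n,
            (n ^ 2 * T2 n (ij.1 + 1) : ℕ) * y ^ (ij.1 + 1) * c ^ ij.2 := by
        rw [mul_sum, ← sum_add_distrib]
        refine sum_congr rfl fun ij _ => ?_
        rw [T2_succ_succ, Nat.cast_add]
        ring
      _ = (y + c * n ^ 2) * ∑ ij ∈ antidiagonal n, T2 n ij.1 * y ^ ij.1 * c ^ ij.2 := by
        rw [sum_antidiagonal_sq_mul_T2_succ, add_mul]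
      _ = ∏ i ∈ range (n + 1), (y + c * i ^ 2) := by
        rw [ih, prod_range_succ, mul_comm]

end GeneratingFunction

theorem polyCauchy2_eq_sum_antidiagonal (k : ℤ) (n : ℕ) :
    polyCauchy2 k n =
      ∑ ij ∈ antidiagonal n, T2 n ij.1 * (-4) ^ ij.2 / (2 * (ij.1 : ℚ) + 1) ^ k := by
  rw [Nat.sum_antidiagonal_eq_sum_range_succ_mk, polyCauchy2]
  simp only [mul_comm]

theorem factorial_mul_genBinom (z : ℝ) (n : ℕ) :
    n ! * genBinom z n = ∏ i ∈ range n, (z - i) :=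
  mul_div_cancel₀ _ (Nat.cast_ne_zero.mpr n.factorial_ne_zero)

theorem factorial_sq_mul_genBinom_mul_genBinom_neg (z : ℝ) (n : ℕ) :
    (n ! : ℝ) ^ 2 * (genBinom z n * genBinom (-z) n) =
      ∏ i ∈ range n, ((i : ℝ) ^ 2 - z ^ 2) := by
  rw [sq, mul_mul_mul_comm, factorial_mul_genBinom, factorial_mul_genBinom, ← prod_mul_distrib]
  exact prod_congr rfl fun i _ => by ring

theorem genBinom_half_mul_genBinom_neg_half_eq_sum (p : ℝ) (n : ℕ) :
    (-4) ^ n * (n ! : ℝ) ^ 2 * (genBinom (p / 2) n * genBinom (-(p / 2)) n) =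
      ∑ ij ∈ antidiagonal n, T2 n ij.1 * (-4) ^ ij.2 * p ^ (2 * ij.1) :=
  calc (-4) ^ n * (n ! : ℝ) ^ 2 * (genBinom (p / 2) n * genBinom (-(p / 2)) n)
    _ = ∏ i ∈ range n, -4 * ((i : ℝ) ^ 2 - (p / 2) ^ 2) := by
      rw [mul_assoc, factorial_sq_mul_genBinom_mul_genBinom_neg, prod_mul_distrib,
        prod_const, card_range]
    _ = ∏ i ∈ range n, (p ^ 2 + -4 * (i : ℝ) ^ 2) := prod_congr rfl fun i _ => by ring
    _ = ∑ ij ∈ antidiagonal n, T2 n ij.1 * (-4) ^ ij.2 * p ^ (2 * ij.1) := by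
      simp only [← sum_antidiagonal_T2_mul_pow, pow_mul, mul_right_comm]

section UnitCube

variable {ι : Type*} [Fintype ι]

theorem setIntegral_unitCube_prod_pow (m : ℕ) :
    ∫ x : ι → ℝ in Set.univ.pi fun _ => Set.Icc 0 1, (∏ i, x i) ^ m =
      1 / ((m : ℝ) + 1) ^ Fintype.card ι := by
  have integral_pow_Icc : ∫ t in Set.Icc (0 : ℝ) 1, t ^ m = 1 / ((m : ℝ) + 1) := by
    rw [integral_Icc_eq_integral_Ioc, ← intervalIntegral.integral_of_le zero_le_one, integral_pow]
    simp
  simp only [← prod_pow]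
  rw [volume_pi, Measure.restrict_pi_pi, integral_fintype_prod_eq_pow fun t : ℝ => t ^ m,
    integral_pow_Icc, div_pow, one_pow]

theorem setIntegral_unitCube_sum_mul_prod_pow {κ : Type*} (s : Finset κ) (a : κ → ℝ) (e : κ → ℕ) :
    ∫ x : ι → ℝ in Set.univ.pi fun _ => Set.Icc 0 1, ∑ j ∈ s, a j * (∏ i, x i) ^ e j =
      ∑ j ∈ s, a j / ((e j : ℝ) + 1) ^ Fintype.card ι := by
  have integrable_term (j : κ) : IntegrableOn (fun x : ι → ℝ => a j * (∏ i, x i) ^ e j)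
      (Set.univ.pi fun _ => Set.Icc 0 1) :=
    ContinuousOn.integrableOn_compact (isCompact_univ_pi fun _ => isCompact_Icc) (by fun_prop)
  rw [integral_finsetSum s fun j _ => integrable_term j]
  simp only [integral_const_mul, setIntegral_unitCube_prod_pow, mul_one_div]

end UnitCube

theorem statement1 (n k : ℕ) (hk : 1 ≤ k) :
    (polyCauchy2 (k : ℤ) n : ℝ) =
      (-4 : ℝ) ^ n * (Nat.factorial n : ℝ) ^ 2 *
        ∫ x : Fin k → ℝ in Set.univ.pi (fun _ => Set.Icc (0 : ℝ) 1),
          genBinom ((∏ i, x i) / 2) n * genBinom (-((∏ i, x i) / 2)) n := by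
  calc (polyCauchy2 k n : ℝ)
    _ = ∑ ij ∈ antidiagonal n, T2 n ij.1 * (-4) ^ ij.2 / (((2 * ij.1 : ℕ) : ℝ) + 1) ^ k := by
      rw [polyCauchy2_eq_sum_antidiagonal]
      push_cast
      simp only [zpow_natCast]
    _ = ∫ x : Fin k → ℝ in Set.univ.pi fun _ => Set.Icc 0 1,
          ∑ ij ∈ antidiagonal n, T2 n ij.1 * (-4) ^ ij.2 * (∏ i, x i) ^ (2 * ij.1) := by
      rw [setIntegral_unitCube_sum_mul_prod_pow, Fintype.card_fin]
    _ = _ := by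
      simp only [← genBinom_half_mul_genBinom_neg_half_eq_sum, integral_const_mul]
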